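/- For every natural number k ≥ 1 and every real number x ≥ k + 2, Kurepa's function satisfies K(x − k)/Γ(x − k + 1) ≤ 1, with equality when x = k + 2. -/

import Mathlib

open MeasureTheory Set

/-- Kurepa's function for real `x`:
`K(x) = ∫₀^∞ e^{-t} (t^x - 1)/(t - 1) dt`. -/
noncomputable def kurepa (x : ℝ) : ℝ :=
  ∫ t in Ioi (0 : ℝ), Real.exp (-t) * ((t ^ x - 1) / (t - 1))

/-!
Kurepa's function satisfies `K(x + 1) = K(x) + Γ(x + 1)`. Since `2 Γ(x + 1) ≤ Γ(x + 2)` for `x ≥ 1`,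
the inequality `K(x) ≤ Γ(x + 1)` passes from `x` to `x + 1`, so it suffices to prove it on `[2, 3)`.
There write `x = s + 2`; it becomes `K(s) ≤ s (s + 2) Γ(s + 1)`. For `t = exp (2u)` the quotient
`(t^s - 1)/(t - 1)` is `t^((s - 1)/2) sinh (s u) / sinh u`, which convexity of `sinh` bounds by
`s t^((s - 1)/2)`. Hence `K(s) ≤ s Γ((s + 1)/2)`, and `Γ((s + 1)/2) ≤ (s + 2) Γ(s + 1)`.
-/

section

open Real
open scoped Nat

theorem add_one_induction {R : Type*} [Ring R] [LinearOrder R] [IsStrictOrderedRing R]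
    [Archimedean R] {P : R → Prop} {a : R} (base : ∀ x ∈ Ico a (a + 1), P x)
    (step : ∀ x, a ≤ x → P x → P (x + 1)) {x : R} (hx : a ≤ x) : P x := by
  have below : ∀ n : ℕ, ∀ y, a ≤ y → y < a + n → P y := by
    intro n
    induction n with
    | zero => exact fun y hy hlt => absurd hy (by simpa using hlt)
    | succ n ih =>
      intro y hy hlt
      push_cast at hlt
      rcases lt_or_ge y (a + 1) with hy1 | hy1
      · exact base y ⟨hy, hy1⟩
      · have ha : a ≤ y - 1 := le_sub_iff_add_le.2 hy1
        have hlt' : y - 1 < a + n := sub_lt_iff_lt_add.2 (by rwa [add_assoc])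
        simpa using step (y - 1) ha (ih (y - 1) ha hlt')
  obtain ⟨n, hn⟩ := exists_nat_gt (x - a)
  exact below n x hx (sub_lt_iff_lt_add'.1 hn)

theorem convexOn_sinh_Ici : ConvexOn ℝ (Ici 0) sinh := by
  refine MonotoneOn.convexOn_of_deriv (convex_Ici 0) continuous_sinh.continuousOn
    differentiable_sinh.differentiableOn ?_
  rw [Real.deriv_sinh]
  exact cosh_strictMonoOn.monotoneOn.mono interior_subset

theorem abs_sinh_mul_le {s : ℝ} (hs : |s| ≤ 1) (u : ℝ) : |sinh (s * u)| ≤ |s| * |sinh u| := by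
  have h := convexOn_sinh_Ici.2 (mem_Ici.2 (abs_nonneg u)) (mem_Ici.2 le_rfl) (abs_nonneg s)
    (sub_nonneg.2 hs) (add_sub_cancel |s| 1)
  simpa [abs_sinh, abs_mul] using h

theorem exp_two_mul_sub_one (u : ℝ) : exp (2 * u) - 1 = 2 * exp u * sinh u := by
  rw [sinh_eq, two_mul, exp_add, exp_neg]
  field_simp

theorem abs_rpow_sub_one_div_sub_one_le {s t : ℝ} (hs : |s| ≤ 1) (ht : 0 < t) :
    |(t ^ s - 1) / (t - 1)| ≤ |s| * t ^ ((s - 1) / 2) := by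
  obtain ⟨u, rfl⟩ : ∃ u, exp (2 * u) = t :=
    ⟨log t / 2, by rw [mul_div_cancel₀ _ two_ne_zero, exp_log ht]⟩
  have numerator : exp (2 * u) ^ s - 1 = 2 * exp (s * u) * sinh (s * u) := by
    rw [← exp_two_mul_sub_one, ← exp_mul]
    ring_nf
  have weight : exp (2 * u) ^ ((s - 1) / 2) = exp (s * u) / exp u := by
    rw [← exp_mul, ← exp_sub]
    ring_nf
  have sinh_ratio : |sinh (s * u) / sinh u| ≤ |s| := by
    rw [abs_div]
    exact div_le_of_le_mul₀ (abs_nonneg _) (abs_nonneg _) (abs_sinh_mul_le hs u)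
  calc |(exp (2 * u) ^ s - 1) / (exp (2 * u) - 1)|
      = |exp (s * u) / exp u * (sinh (s * u) / sinh u)| := by
        rw [numerator, exp_two_mul_sub_one, mul_div_mul_comm, mul_div_mul_left _ _ two_ne_zero]
    _ = |sinh (s * u) / sinh u| * exp (2 * u) ^ ((s - 1) / 2) := by
        rw [weight, abs_mul, abs_of_pos (by positivity : 0 < exp (s * u) / exp u), mul_comm]
    _ ≤ |s| * exp (2 * u) ^ ((s - 1) / 2) := by gcongr

/-- The integrand of Kurepa's function, with value `0` at `t = 1` in place of the limit `x / e`;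
this does not affect the integral. -/
noncomputable def kurepaIntegrand (x t : ℝ) : ℝ :=
  exp (-t) * ((t ^ x - 1) / (t - 1))

theorem abs_kurepaIntegrand_le {s t : ℝ} (hs : |s| ≤ 1) (ht : 0 < t) :
    |kurepaIntegrand s t| ≤ |s| * (exp (-t) * t ^ ((s + 1) / 2 - 1)) := by
  rw [kurepaIntegrand, abs_mul, abs_exp, mul_left_comm,
    show (s + 1) / 2 - 1 = (s - 1) / 2 by ring]
  gcongr
  exact abs_rpow_sub_one_div_sub_one_le hs ht

theorem kurepaIntegrand_add_one {x t : ℝ} (ht : 0 < t) (ht1 : t ≠ 1) :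
    kurepaIntegrand (x + 1) t = kurepaIntegrand x t + exp (-t) * t ^ (x + 1 - 1) := by
  have : t - 1 ≠ 0 := sub_ne_zero.2 ht1
  rw [kurepaIntegrand, kurepaIntegrand, rpow_add_one ht.ne', add_sub_cancel_right]
  field_simp
  ring

theorem kurepaIntegrand_add_one_ae_eq (x : ℝ) :
    kurepaIntegrand (x + 1) =ᵐ[volume.restrict (Ioi 0)]
      fun t => kurepaIntegrand x t + exp (-t) * t ^ (x + 1 - 1) := by
  filter_upwards [ae_restrict_of_ae (Measure.ae_ne volume 1), ae_restrict_mem measurableSet_Ioi]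
    with t ht1 ht using kurepaIntegrand_add_one ht ht1

theorem integrableOn_kurepaIntegrand_of_le_one {s : ℝ} (hs : -1 < s) (hs1 : s ≤ 1) :
    IntegrableOn (kurepaIntegrand s) (Ioi 0) := by
  refine ((GammaIntegral_convergent (s := (s + 1) / 2) (by linarith)).const_mul |s|).mono'
    (by unfold kurepaIntegrand; fun_prop) ?_
  filter_upwards [ae_restrict_mem measurableSet_Ioi] with t ht
  exact abs_kurepaIntegrand_le (abs_le.2 ⟨hs.le, hs1⟩) ht

theorem integrableOn_kurepaIntegrand {x : ℝ} (hx : -1 < x) :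
    IntegrableOn (kurepaIntegrand x) (Ioi 0) := by
  rcases le_total x 0 with hx0 | hx0
  · exact integrableOn_kurepaIntegrand_of_le_one hx (by linarith)
  · refine add_one_induction (P := fun y => IntegrableOn (kurepaIntegrand y) (Ioi 0))
      (fun s hs => ?_) (fun y hy ih => ?_) hx0
    · exact integrableOn_kurepaIntegrand_of_le_one (by linarith [hs.1]) (by linarith [hs.2])
    · exact (ih.add (GammaIntegral_convergent (by linarith))).congr
        (kurepaIntegrand_add_one_ae_eq y).symm

theorem kurepa_add_one {x : ℝ} (hx : -1 < x) : kurepa (x + 1) = kurepa x + Gamma (x + 1) := by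
  rw [Gamma_eq_integral (by linarith)]
  exact (integral_congr_ae (kurepaIntegrand_add_one_ae_eq x)).trans
    (integral_add (integrableOn_kurepaIntegrand hx) (GammaIntegral_convergent (by linarith)))

theorem kurepa_natCast (n : ℕ) : kurepa n = ∑ i ∈ Finset.range n, (i ! : ℝ) := by
  induction n with
  | zero => simp [kurepa]
  | succ n ih =>
    rw [Nat.cast_succ, kurepa_add_one (by linarith [n.cast_nonneg (α := ℝ)]), ih,
      Gamma_nat_eq_factorial, Finset.sum_range_succ]

theorem abs_kurepa_le {s : ℝ} (hs : -1 < s) (hs1 : s ≤ 1) :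
    |kurepa s| ≤ |s| * Gamma ((s + 1) / 2) := by
  have hpos : 0 < (s + 1) / 2 := by linarith
  rw [Gamma_eq_integral hpos, ← integral_const_mul]
  refine norm_integral_le_of_norm_le (f := kurepaIntegrand s)
    ((GammaIntegral_convergent hpos).const_mul |s|) ?_
  filter_upwards [ae_restrict_mem measurableSet_Ioi] with t ht
  exact abs_kurepaIntegrand_le (abs_le.2 ⟨hs.le, hs1⟩) ht

theorem Gamma_le_one {x : ℝ} (hx : x ∈ Icc 1 2) : Gamma x ≤ 1 := by
  rw [← segment_eq_Icc one_le_two] at hx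
  simpa using convexOn_Gamma.le_on_segment (mem_Ioi.2 one_pos) (mem_Ioi.2 two_pos) hx

theorem two_le_Gamma {x : ℝ} (hx : 3 ≤ x) : 2 ≤ Gamma x := by
  have := Gamma_strictMonoOn_Ici.monotoneOn (a := 3) (by norm_num) (mem_Ici.2 (by linarith)) hx
  simpa using this

theorem Gamma_add_one_div_two_le {s : ℝ} (hs : s ∈ Icc 0 1) :
    Gamma ((s + 1) / 2) ≤ (s + 2) * Gamma (s + 1) := by
  obtain ⟨hs0, hs1⟩ := hs
  refine le_of_mul_le_mul_left ?_ (by linarith : 0 < s + 1)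
  calc (s + 1) * Gamma ((s + 1) / 2)
      = 2 * Gamma ((s + 1) / 2 + 1) := by rw [Gamma_add_one (by linarith)]; ring
    _ ≤ 2 := by linarith [Gamma_le_one (x := (s + 1) / 2 + 1) ⟨by linarith, by linarith⟩]
    _ ≤ Gamma (s + 1 + 1 + 1) := two_le_Gamma (by linarith)
    _ = (s + 1) * ((s + 2) * Gamma (s + 1)) := by
        rw [Gamma_add_one (by linarith), Gamma_add_one (by linarith)]; ring

theorem kurepa_add_two_le_Gamma {s : ℝ} (hs : s ∈ Icc 0 1) :
    kurepa (s + 2) ≤ Gamma (s + 2 + 1) := by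
  obtain ⟨hs0, hs1⟩ := hs
  have kurepa_le : kurepa s ≤ s * ((s + 2) * Gamma (s + 1)) :=
    calc kurepa s ≤ |s| * Gamma ((s + 1) / 2) :=
          (le_abs_self _).trans (abs_kurepa_le (by linarith) hs1)
      _ ≤ s * ((s + 2) * Gamma (s + 1)) := by
          rw [abs_of_nonneg hs0]
          gcongr
          exact Gamma_add_one_div_two_le ⟨hs0, hs1⟩
  rw [show s + 2 = s + 1 + 1 by ring]
  calc kurepa (s + 1 + 1) = kurepa s + Gamma (s + 1) + (s + 1) * Gamma (s + 1) := by
        rw [kurepa_add_one (by linarith), kurepa_add_one (by linarith),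
          Gamma_add_one (by linarith : s + 1 ≠ 0)]
    _ ≤ (s + 1 + 1) * ((s + 1) * Gamma (s + 1)) := by linarith
    _ = Gamma (s + 1 + 1 + 1) := by
        rw [Gamma_add_one (s := s + 1 + 1) (by linarith), Gamma_add_one (s := s + 1) (by linarith)]

theorem kurepa_le_Gamma_add_one {x : ℝ} (hx : 2 ≤ x) : kurepa x ≤ Gamma (x + 1) := by
  refine add_one_induction (P := fun y => kurepa y ≤ Gamma (y + 1))
    (fun y hy => ?_) (fun y hy ih => ?_) hx
  · simpa using kurepa_add_two_le_Gamma (s := y - 2) ⟨by linarith [hy.1], by linarith [hy.2]⟩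
  · calc kurepa (y + 1) = kurepa y + Gamma (y + 1) := kurepa_add_one (by linarith)
      _ ≤ 2 * Gamma (y + 1) := by linarith
      _ ≤ (y + 1) * Gamma (y + 1) :=
          mul_le_mul_of_nonneg_right (by linarith) (Gamma_nonneg_of_nonneg (by linarith))
      _ = Gamma (y + 1 + 1) := (Gamma_add_one (by linarith)).symm

theorem kurepa_two : kurepa 2 = 2 := by
  simpa [Finset.sum_range_succ, one_add_one_eq_two] using kurepa_natCast 2

end

/-- For every `k ≥ 1` and `x ≥ k + 2`, `K(x - k)/Γ(x - k + 1) ≤ 1`,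
with equality when `x = k + 2`. -/
theorem kurepa_div_Gamma_le_one (k : ℕ) (hk : 1 ≤ k) :
    (∀ x : ℝ, (k : ℝ) + 2 ≤ x → kurepa (x - k) / Real.Gamma (x - k + 1) ≤ 1) ∧
    kurepa (((k : ℝ) + 2) - k) / Real.Gamma (((k : ℝ) + 2) - k + 1) = 1 := by
  constructor
  · intro x hx
    exact div_le_one_of_le₀ (kurepa_le_Gamma_add_one (by linarith))
      (Real.Gamma_nonneg_of_nonneg (by linarith))
  · have Gamma_three : Real.Gamma 3 = 2 := by simp
    rw [add_sub_cancel_left, kurepa_two, two_add_one_eq_three, Gamma_three, div_self two_ne_zero]
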